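/- arXiv:1410.3166 — 2 statements merged into one kernel-verified Lean document; each statement's English description precedes it below -/
import Mathlib

section
/- Assume r ≥ 2. If (d_0,…,d_L) ∈ ℕ^{L+1} satisfies d_l ≤ r·d_{l-1} and d_{l-1} ≤ r·d_l for every l ∈ {1,…,L}, then there exists a finite-dimensional Λ-module M with rad(M) = (d_0,…,d_L) and socseq(M) = (d_L,…,d_0). -/
noncomputable section

/-- The relation on the free algebra killing all products of `L+1` generators. -/
def TruncRel (K : Type*) [Field K] (r L : ℕ) :
    FreeAlgebra K (Fin r) → FreeAlgebra K (Fin r) → Prop := fun a b =>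
  (∃ f : Fin (L + 1) → Fin r, a = (List.ofFn fun j => FreeAlgebra.ι K (f j)).prod) ∧ b = 0

/-- The local truncated path algebra with `r` loops and Loewy length `L+1`:
the quotient of `K⟨X_1,…,X_r⟩` by the two-sided ideal generated by all products
of `L+1` generators. -/
def TruncAlg (K : Type*) [Field K] (r L : ℕ) : Type _ := RingQuot (TruncRel K r L)

instance (K : Type*) [Field K] (r L : ℕ) : Ring (TruncAlg K r L) :=
  inferInstanceAs (Ring (RingQuot _))

instance (K : Type*) [Field K] (r L : ℕ) : Algebra K (TruncAlg K r L) :=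
  inferInstanceAs (Algebra K (RingQuot _))

/-- The images of the generators `X i` in the truncated algebra. -/
def gen (K : Type*) [Field K] (r L : ℕ) (i : Fin r) : TruncAlg K r L :=
  RingQuot.mkAlgHom K (TruncRel K r L) (FreeAlgebra.ι K i)

/-- The two-sided ideal `J` of `Λ` generated by the images of `X_1,…,X_r`,
realized as a `K`-submodule of `Λ`. -/
def Jrad (K : Type*) [Field K] (r L : ℕ) : Submodule K (TruncAlg K r L) :=
  ⊤ * Submodule.span K (Set.range (gen K r L)) * ⊤

/-- `J^l M`, the submodule of `M` given by the action of `J^l`. -/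
def jpow (K : Type*) [Field K] (r L : ℕ) (M : Type*) [AddCommGroup M] [Module K M]
    [Module (TruncAlg K r L) M] [IsScalarTower K (TruncAlg K r L) M] (l : ℕ) :
    Submodule (TruncAlg K r L) M :=
  Submodule.span (TruncAlg K r L)
    {x : M | ∃ a ∈ (Jrad K r L ^ l : Submodule K (TruncAlg K r L)), ∃ m : M, x = a • m}

/-- The socle of a module: the supremum of all simple submodules. -/
def socle (R N : Type*) [Ring R] [AddCommGroup N] [Module R N] : Submodule R N :=
  sSup {p : Submodule R N | IsSimpleModule R ↥p}

/-- The socle series: `socSeries R M l` is `soc_{l-1} M`, so `socSeries R M 0 = soc_{-1} M = ⊥`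
and `socSeries R M (l+1) = soc_l M` is the preimage in `M` of `soc (M / soc_{l-1} M)`. -/
def socSeries (R M : Type*) [Ring R] [AddCommGroup M] [Module R M] : ℕ → Submodule R M
  | 0 => ⊥
  | l + 1 => Submodule.comap (socSeries R M l).mkQ (socle R (M ⧸ socSeries R M l))

/-- Dimension of the subquotient `q / (p ⊓ q)`; for `p ≤ q` this is `dim (q/p)`. -/
def quotDim (K M : Type*) [Field K] [AddCommGroup M] [Module K M]
    (p q : Submodule K M) : ℕ :=
  Module.finrank K (↥q ⧸ Submodule.comap q.subtype p)

/-- The radical layering `rad(M) = (dim_K J^l M / J^{l+1} M)_{l=0,…,L}`. -/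
def radLayering (K : Type*) [Field K] (r L : ℕ) (M : Type*) [AddCommGroup M] [Module K M]
    [Module (TruncAlg K r L) M] [IsScalarTower K (TruncAlg K r L) M] : Fin (L + 1) → ℕ :=
  fun l => quotDim K M ((jpow K r L M ((l : ℕ) + 1)).restrictScalars K)
    ((jpow K r L M (l : ℕ)).restrictScalars K)

/-- The socle layering `socseq(M) = (dim_K soc_l M / soc_{l-1} M)_{l=0,…,L}`. -/
def socLayering (K : Type*) [Field K] (r L : ℕ) (M : Type*) [AddCommGroup M] [Module K M]
    [Module (TruncAlg K r L) M] [IsScalarTower K (TruncAlg K r L) M] : Fin (L + 1) → ℕ :=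
  fun l => quotDim K M ((socSeries (TruncAlg K r L) M (l : ℕ)).restrictScalars K)
    ((socSeries (TruncAlg K r L) M ((l : ℕ) + 1)).restrictScalars K)

/-- The dominance order on `ℕ^{L+1}`: `a ≼ b` iff all partial sums satisfy `≤`. -/
def DomLE (L : ℕ) (a b : Fin (L + 1) → ℕ) : Prop :=
  ∀ l : Fin (L + 1), ∑ j ∈ Finset.Iic l, a j ≤ ∑ j ∈ Finset.Iic l, b j

/-- `reverse (a_0, …, a_L) = (a_L, …, a_0)`. -/
def revTuple (L : ℕ) (a : Fin (L + 1) → ℕ) : Fin (L + 1) → ℕ := fun l => a l.rev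

/-! Writing `V` for the span of the arrows, `J ^ n • M = V ^ n • M`, and a subspace `P` lies in
`soc_l M` iff `V • P ≤ soc_{l-1} M`. A decreasing chain `M = F 0 ≥ ⋯ ≥ F (L + 1) = 0` that satisfies
both `V • F n = F (n + 1)` and `F n = {x | V • x ≤ F (n + 1)}` is therefore at once the radical
filtration and the reversed socle filtration.

To get one with prescribed layers, take a basis of `d l` vectors in layer `l` and let each arrow act
by a partial matching between consecutive layers. Cutting the larger of the layers `l`, `l + 1`
into at most `r` blocks of the size of the smaller one and matching the `i`-th block with the
smaller layer through the `i`-th arrow, every vector above layer `0` is hit and every vector below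
layer `L` is moved to a nonzero vector. -/

universe u

section GeneratingSubspace

variable {K A M : Type*} [Field K] [Ring A] [Algebra K A] [AddCommGroup M] [Module K M]
  [Module A M] [IsScalarTower K A M] {V : Submodule K A} {p : Submodule K M}

theorem span_smul_le_iff {s : Set A} {p q : Submodule K M} :
    Submodule.span K s • p ≤ q ↔ ∀ a ∈ s, ∀ x ∈ p, a • x ∈ q := by
  refine ⟨fun h a ha x hx => h (Submodule.smul_mem_smul (Submodule.subset_span ha) hx),
    fun h => Submodule.smul_le.2 fun a ha x hx => ?_⟩
  induction ha using Submodule.span_induction with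
  | mem a ha => exact h a ha x hx
  | zero => rw [zero_smul]; exact zero_mem q
  | add a b _ _ iha ihb => rw [add_smul]; exact add_mem iha ihb
  | smul c a _ iha => rw [smul_assoc]; exact q.smul_mem c iha

theorem top_smul_eq_of_smul_le (hV : Algebra.adjoin K (V : Set A) = ⊤) (hp : V • p ≤ p) :
    (⊤ : Submodule K A) • p = p := by
  refine le_antisymm (Submodule.smul_le.2 fun a _ x hx => ?_)
    fun x hx => one_smul A x ▸ Submodule.smul_mem_smul trivial hx
  have ha : a ∈ Algebra.adjoin K (V : Set A) := hV ▸ trivial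
  induction ha using Algebra.adjoin_induction generalizing x with
  | mem a ha => exact hp (Submodule.smul_mem_smul ha hx)
  | algebraMap c => rw [algebraMap_smul]; exact p.smul_mem c hx
  | add a b _ _ iha ihb => rw [add_smul]; exact add_mem (iha trivial x hx) (ihb trivial x hx)
  | mul a b _ _ iha ihb => rw [mul_smul]; exact iha trivial _ (ihb trivial x hx)

theorem exists_restrictScalars_eq_of_smul_le (hV : Algebra.adjoin K (V : Set A) = ⊤)
    (hp : V • p ≤ p) : ∃ N : Submodule A M, N.restrictScalars K = p :=
  ⟨{ p with
      smul_mem' := fun _ _ hx =>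
        (top_smul_eq_of_smul_le hV hp).le (Submodule.smul_mem_smul trivial hx) }, rfl⟩

theorem submodule_mul_smul (V W : Submodule K A) (p : Submodule K M) : (V * W) • p = V • W • p :=
  Submodule.smul_assoc V W p

theorem smul_pow_smul_top_le (n : ℕ) :
    V • V ^ n • (⊤ : Submodule K M) ≤ V ^ n • (⊤ : Submodule K M) := by
  rw [← submodule_mul_smul, ← pow_succ', pow_succ, submodule_mul_smul]
  exact Submodule.smul_mono le_rfl le_top

theorem ideal_smul_eq_smul (hV : Algebra.adjoin K (V : Set A) = ⊤) (hp : V • p ≤ p) :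
    (⊤ * V * ⊤ : Submodule K A) • p = V • p := by
  rw [submodule_mul_smul, top_smul_eq_of_smul_le hV hp, submodule_mul_smul,
    top_smul_eq_of_smul_le hV (Submodule.smul_mono le_rfl hp)]

theorem ideal_pow_smul_top_eq (hV : Algebra.adjoin K (V : Set A) = ⊤) (n : ℕ) :
    (⊤ * V * ⊤ : Submodule K A) ^ n • (⊤ : Submodule K M) = V ^ n • ⊤ := by
  induction n with
  | zero => rw [pow_zero, pow_zero]
  | succ n ih =>
    rw [pow_succ', submodule_mul_smul, ih, ideal_smul_eq_smul hV (smul_pow_smul_top_le n),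
      pow_succ', submodule_mul_smul]

theorem smul_restrictScalars_eq_bot_of_isSimpleModule (hV : Algebra.adjoin K (V : Set A) = ⊤)
    (hnil : IsNilpotent V) (S : Submodule A M) [IsSimpleModule A S] :
    V • S.restrictScalars K = ⊥ := by
  have hle : V • S.restrictScalars K ≤ S.restrictScalars K :=
    Submodule.smul_le.2 fun a _ x hx => S.smul_mem a hx
  obtain ⟨N, hN⟩ := exists_restrictScalars_eq_of_smul_le hV (Submodule.smul_mono le_rfl hle)
  have hNS : N ≤ S := (Submodule.restrictScalars_le K).1 (hN.trans_le hle)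
  rcases (isSimpleModule_iff_isAtom.1 ‹_›).le_iff.1 hNS with rfl | rfl
  · exact hN.symm
  · obtain ⟨n, hn⟩ := hnil
    have hpow : ∀ k, V ^ k • N.restrictScalars K = N.restrictScalars K := fun k => by
      induction k with
      | zero => rw [pow_zero, Submodule.one_smul]
      | succ k ih => rw [pow_succ, submodule_mul_smul, ← hN, ih]
    rw [← hN, ← hpow n, hn, Submodule.zero_eq_bot, Submodule.bot_smul]

theorem mem_socle_of_forall_smul_eq_zero (hV : Algebra.adjoin K (V : Set A) = ⊤) {x : M}
    (hx : ∀ a ∈ V, a • x = 0) : x ∈ socle A M := by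
  rcases eq_or_ne x 0 with rfl | hx0
  · exact zero_mem _
  have hline : V • Submodule.span K {x} ≤ Submodule.span K {x} :=
    Submodule.smul_le.2 fun a ha y hy => by
      obtain ⟨c, rfl⟩ := Submodule.mem_span_singleton.1 hy
      rw [smul_algebra_smul_comm, hx a ha, smul_zero]
      exact zero_mem _
  obtain ⟨S, hS⟩ := exists_restrictScalars_eq_of_smul_le hV hline
  have hatom : IsAtom (S.restrictScalars K) := hS ▸ nonzero_span_atom x hx0
  have hsimple : IsSimpleModule A S := isSimpleModule_iff_isAtom.2
    ⟨fun h => hatom.1 (by rw [h, Submodule.restrictScalars_bot]), fun T hT =>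
      (Submodule.restrictScalars_eq_bot_iff K A M).1 (hatom.2 _ hT)⟩
  have hxS : x ∈ S.restrictScalars K := hS ▸ Submodule.mem_span_singleton_self x
  exact le_sSup (a := S) hsimple hxS

theorem mem_socle_iff (hV : Algebra.adjoin K (V : Set A) = ⊤) (hnil : IsNilpotent V) {x : M} :
    x ∈ socle A M ↔ ∀ a ∈ V, a • x = 0 := by
  refine ⟨fun hx a ha => ?_, mem_socle_of_forall_smul_eq_zero hV⟩
  rw [socle, sSup_eq_iSup'] at hx
  induction hx using Submodule.iSup_induction' with
  | mem S y hy =>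
    have : IsSimpleModule A S.1 := S.2
    have hS := smul_restrictScalars_eq_bot_of_isSimpleModule hV hnil S.1
    exact (Submodule.mem_bot K).1 (hS.le (Submodule.smul_mem_smul ha hy))
  | zero => exact smul_zero a
  | add y z _ _ ihy ihz => rw [smul_add, ihy, ihz, add_zero]

theorem le_socSeries_succ_iff (hV : Algebra.adjoin K (V : Set A) = ⊤) (hnil : IsNilpotent V)
    (n : ℕ) : p ≤ (socSeries A M (n + 1)).restrictScalars K ↔
      V • p ≤ (socSeries A M n).restrictScalars K := by
  have mem_iff (x : M) : x ∈ socSeries A M (n + 1) ↔ ∀ a ∈ V, a • x ∈ socSeries A M n := by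
    simp only [socSeries, Submodule.mem_comap, mem_socle_iff hV hnil,
      Submodule.mkQ_apply, ← Submodule.Quotient.mk_smul, Submodule.Quotient.mk_eq_zero]
  rw [Submodule.smul_le]
  exact ⟨fun h a ha x hx => (mem_iff x).1 (h hx) a ha, fun h x hx => (mem_iff x).2
    fun a ha => h a ha x hx⟩

end GeneratingSubspace

namespace TruncAlg

section Generators

variable (K : Type*) [Field K] (r L : ℕ)

/-- The span of the generators (arrows) of `TruncAlg K r L`. -/
def genSpan : Submodule K (TruncAlg K r L) := Submodule.span K (Set.range (gen K r L))

theorem adjoin_genSpan : Algebra.adjoin K (genSpan K r L : Set (TruncAlg K r L)) = ⊤ := by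
  let π : FreeAlgebra K (Fin r) →ₐ[K] TruncAlg K r L := RingQuot.mkAlgHom K (TruncRel K r L)
  have hπ : Function.Surjective π := RingQuot.mkAlgHom_surjective K (TruncRel K r L)
  have hrange : Set.range (gen K r L) = π '' Set.range (FreeAlgebra.ι K) := by
    rw [← Set.range_comp]; rfl
  rw [genSpan, Algebra.adjoin_span, hrange, ← AlgHom.map_adjoin, FreeAlgebra.adjoin_range_ι,
    Algebra.map_top]
  exact (AlgHom.range_eq_top π).2 hπ

theorem prod_ofFn_gen_eq_zero (f : Fin (L + 1) → Fin r) :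
    (List.ofFn fun j => gen K r L (f j)).prod = 0 := by
  have h := RingQuot.mkAlgHom_rel K (s := TruncRel K r L) ⟨⟨f, rfl⟩, rfl⟩
  rw [map_list_prod, List.map_ofFn, map_zero] at h
  exact h

theorem genSpan_pow_eq_zero : genSpan K r L ^ (L + 1) = 0 := by
  rw [genSpan, Submodule.span_pow, Submodule.zero_eq_bot, Submodule.span_eq_bot]
  intro a ha
  obtain ⟨f, rfl⟩ := Set.mem_pow.1 ha
  choose g hg using fun j => (f j).2
  simp only [← hg, prod_ofFn_gen_eq_zero]

end Generators

section Filtrations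

variable {K M : Type*} [Field K] {r L : ℕ} [AddCommGroup M] [Module K M]
  [Module (TruncAlg K r L) M] [IsScalarTower K (TruncAlg K r L) M]

theorem restrictScalars_jpow (n : ℕ) :
    (jpow K r L M n).restrictScalars K = genSpan K r L ^ n • ⊤ := by
  obtain ⟨N, hN⟩ := exists_restrictScalars_eq_of_smul_le (adjoin_genSpan K r L)
    (smul_pow_smul_top_le (M := M) n)
  have hJ : Jrad K r L ^ n • (⊤ : Submodule K M) = N.restrictScalars K :=
    (ideal_pow_smul_top_eq (adjoin_genSpan K r L) n).trans hN.symm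
  rw [← hN]
  apply le_antisymm
  · refine (Submodule.restrictScalars_le K).2 (Submodule.span_le.2 ?_)
    rintro _ ⟨a, ha, x, rfl⟩
    exact hJ.le (Submodule.smul_mem_smul ha trivial)
  · rw [← hJ, Submodule.smul_le]
    exact fun a ha x _ => Submodule.subset_span ⟨a, ha, x, rfl⟩

theorem restrictScalars_jpow_eq {F : ℕ → Submodule K M} (hF0 : F 0 = ⊤)
    (hF : ∀ n, genSpan K r L • F n = F (n + 1)) (n : ℕ) :
    (jpow K r L M n).restrictScalars K = F n := by
  rw [restrictScalars_jpow]
  induction n with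
  | zero => rw [pow_zero, Submodule.one_smul, hF0]
  | succ n ih => rw [pow_succ', submodule_mul_smul, ih, hF]

theorem restrictScalars_socSeries_eq {F : ℕ → Submodule K M} {m : ℕ} (hFm : F m = ⊥)
    (hF : ∀ n < m, ∀ p, genSpan K r L • p ≤ F (n + 1) ↔ p ≤ F n) (n : ℕ) (hn : n ≤ m) :
    (socSeries (TruncAlg K r L) M n).restrictScalars K = F (m - n) := by
  induction n with
  | zero => rw [Nat.sub_zero, hFm]; rfl
  | succ n ih =>
    refine eq_of_forall_le_iff fun p => ?_
    have hstep : m - (n + 1) + 1 = m - n := by lia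
    rw [le_socSeries_succ_iff (adjoin_genSpan K r L) ⟨L + 1, genSpan_pow_eq_zero K r L⟩,
      ih (by lia), ← hstep, hF _ (by lia)]

end Filtrations

section Construction

variable {K M : Type*} [Field K] {r L : ℕ} [AddCommGroup M] [Module K M]

theorem exists_module_of_prod_eq_zero (X : Fin r → Module.End K M)
    (hX : ∀ f : Fin (L + 1) → Fin r, (List.ofFn fun j => X (f j)).prod = 0) :
    ∃ (_ : Module (TruncAlg K r L) M) (_ : IsScalarTower K (TruncAlg K r L) M),
      ∀ i x, gen K r L i • x = X i x := by
  have hrel : ∀ ⦃a b⦄, TruncRel K r L a b →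
      FreeAlgebra.lift K X a = FreeAlgebra.lift K X b := by
    rintro _ _ ⟨⟨f, rfl⟩, rfl⟩
    rw [map_list_prod, List.map_ofFn, map_zero, ← hX f]
    congr 2
    exact funext fun j => FreeAlgebra.lift_ι_apply X (f j)
  let ρ : TruncAlg K r L →ₐ[K] Module.End K M :=
    RingQuot.liftAlgHom K ⟨FreeAlgebra.lift K X, hrel⟩
  have hρ (i : Fin r) : ρ (gen K r L i) = X i :=
    (RingQuot.liftAlgHom_mkAlgHom_apply K _ hrel _).trans (FreeAlgebra.lift_ι_apply X i)
  let _ : Module (TruncAlg K r L) M := Module.compHom M ρ.toRingHom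
  refine ⟨inferInstance, ⟨fun c a x => ?_⟩, fun i x => LinearMap.congr_fun (hρ i) x⟩
  exact LinearMap.congr_fun (map_smul ρ c a) x

theorem prod_ofFn_apply_mem {κ : Type*} {X : κ → Module.End K M} {F : ℕ → Submodule K M}
    (hF0 : F 0 = ⊤) (hX : ∀ i n, ∀ x ∈ F n, X i x ∈ F (n + 1)) :
    ∀ (n : ℕ) (f : Fin n → κ) (x : M), (List.ofFn fun j => X (f j)).prod x ∈ F n
  | 0, _, _ => hF0 ▸ trivial
  | n + 1, f, x => by
    rw [List.ofFn_succ, List.prod_cons, Module.End.mul_apply]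
    exact hX _ _ _ (prod_ofFn_apply_mem hF0 hX n _ x)

theorem exists_module_of_filtration (X : Fin r → Module.End K M) (F : ℕ → Submodule K M)
    (hF0 : F 0 = ⊤) (hFL : F (L + 1) = ⊥) (hmap : ∀ n, ⨆ i, (F n).map (X i) = F (n + 1))
    (hcomap : ∀ n < L + 1, ⨅ i, (F (n + 1)).comap (X i) = F n) :
    ∃ (_ : Module (TruncAlg K r L) M) (_ : IsScalarTower K (TruncAlg K r L) M),
      (∀ n, (jpow K r L M n).restrictScalars K = F n) ∧
      ∀ n ≤ L + 1, (socSeries (TruncAlg K r L) M n).restrictScalars K = F (L + 1 - n) := by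
  have hX (i : Fin r) (n : ℕ) : F n ≤ (F (n + 1)).comap (X i) :=
    Submodule.map_le_iff_le_comap.1 ((le_iSup _ i).trans (hmap n).le)
  have hzero (f : Fin (L + 1) → Fin r) : (List.ofFn fun j => X (f j)).prod = 0 :=
    LinearMap.ext fun x => (Submodule.mem_bot K).1 <|
      hFL.le (prod_ofFn_apply_mem hF0 hX (L + 1) f x)
  obtain ⟨_, _, hgen⟩ := exists_module_of_prod_eq_zero X hzero
  have smul_le_iff (p q : Submodule K M) : genSpan K r L • p ≤ q ↔ ∀ i, p ≤ q.comap (X i) := by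
    simp only [genSpan, span_smul_le_iff, Set.forall_mem_range, hgen]
    rfl
  refine ⟨_, _, restrictScalars_jpow_eq hF0 fun n => ?_,
    restrictScalars_socSeries_eq hFL fun n hn p => ?_⟩
  · refine eq_of_forall_ge_iff fun q => ?_
    simp only [smul_le_iff, ← hmap n, iSup_le_iff, Submodule.map_le_iff_le_comap]
  · rw [smul_le_iff, ← hcomap n hn, le_iInf_iff]

end Construction

end TruncAlg

section Layers

variable {ι : Type*} (K : Type*) [Field K] (lev : ι → ℕ)

/-- The subspace of `ι → K` spanned by the basis vectors of level at least `n`, for a level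
function `lev` on the basis. -/
def levelFiltration (n : ℕ) : Submodule K (ι → K) := Submodule.pi {p | lev p < n} fun _ => ⊥

variable {K lev}

theorem mem_levelFiltration {n : ℕ} {v : ι → K} :
    v ∈ levelFiltration K lev n ↔ ∀ p, lev p < n → v p = 0 := Iff.rfl

theorem levelFiltration_zero : levelFiltration K lev 0 = ⊤ :=
  eq_top_iff.2 fun _ _ _ hp => absurd hp (Nat.not_lt_zero _)

theorem levelFiltration_eq_bot {n : ℕ} (hlev : ∀ p, lev p < n) : levelFiltration K lev n = ⊥ :=
  eq_bot_iff.2 fun _ hv => funext fun p => hv p (hlev p)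

theorem levelFiltration_le_iff [Finite ι] [DecidableEq ι] {n : ℕ} {P : Submodule K (ι → K)} :
    levelFiltration K lev n ≤ P ↔ ∀ p c, n ≤ lev p → Pi.single p c ∈ P := by
  have := Fintype.ofFinite ι
  constructor
  · intro h p c hp
    refine h fun q hq => ?_
    have hne : q ≠ p := by rintro rfl; exact hp.not_gt hq
    exact Pi.single_eq_of_ne (M := fun _ => K) hne c
  · intro h v hv
    rw [← Finset.univ_sum_single v]
    refine sum_mem fun p _ => ?_
    rcases lt_or_ge (lev p) n with hp | hp
    · rw [mem_levelFiltration.1 hv p hp, Pi.single_zero]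
      exact zero_mem P
    · exact h p (v p) hp

theorem quotDim_levelFiltration [Finite ι] (n : ℕ) :
    quotDim K (ι → K) (levelFiltration K lev (n + 1)) (levelFiltration K lev n) =
      Nat.card {p // lev p = n} := by
  have := Fintype.ofFinite {p // lev p = n}
  let f : levelFiltration K lev n →ₗ[K] ({p // lev p = n} → K) :=
    LinearMap.funLeft K K Subtype.val ∘ₗ Submodule.subtype _
  have hker : LinearMap.ker f =
      (levelFiltration K lev (n + 1)).comap (levelFiltration K lev n).subtype := by
    ext ⟨v, hv⟩
    refine ⟨fun h p hp => ?_, fun h => funext fun ⟨p, hp⟩ => h p (by simp [hp])⟩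
    rcases Nat.lt_succ_iff_lt_or_eq.1 hp with hlt | heq
    · exact hv p hlt
    · exact congrFun h ⟨p, heq⟩
  have hsurj : Function.Surjective f := fun w => by
    classical
    exact ⟨⟨fun p => if h : lev p = n then w ⟨p, h⟩ else 0, fun p hp => dif_neg hp.ne⟩,
      funext fun ⟨p, hp⟩ => dif_pos hp⟩
  rw [quotDim, ← hker, (f.quotKerEquivOfSurjective hsurj).finrank_eq,
    Module.finrank_fintype_fun_eq_card, Nat.card_eq_fintype_card]

end Layers

section EdgeEndomorphisms

variable {ι : Type*} [Fintype ι] (K : Type*) [Field K]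

open Classical in
/-- The endomorphism of `ι → K` sending the basis vector at `q` to the sum of the basis vectors at
the targets of the edges `E q p` leaving `q`. -/
def edgeEnd (E : ι → ι → Prop) : Module.End K (ι → K) :=
  Matrix.mulVecLin (.of fun p q => if E q p then 1 else 0)

variable {K} {E : ι → ι → Prop} {p q : ι}

open Classical in
theorem edgeEnd_apply (v : ι → K) (p : ι) :
    edgeEnd K E v p = ∑ q, if E q p then v q else 0 := by
  simp [edgeEnd, Matrix.mulVec, dotProduct]

theorem edgeEnd_apply_of_edge (hE : Relator.LeftUnique E) (h : E q p) (v : ι → K) :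
    edgeEnd K E v p = v q := by
  rw [edgeEnd_apply, Finset.sum_eq_single q, if_pos h]
  · exact fun q' _ hne => if_neg fun h' => hne (hE h' h)
  · exact fun hq => absurd (Finset.mem_univ q) hq

theorem edgeEnd_single [DecidableEq ι] (hE : Relator.RightUnique E) (h : E q p) (c : K) :
    edgeEnd K E (Pi.single q c) = Pi.single p c := by
  funext p'
  have hp' : E q p' ↔ p' = p := ⟨fun h' => hE h' h, fun h' => h' ▸ h⟩
  simp [edgeEnd, hp', Pi.single_apply]

variable {lev : ι → ℕ}

theorem map_edgeEnd_levelFiltration_le (hlev : ∀ q p, E q p → lev p = lev q + 1) (n : ℕ) :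
    (levelFiltration K lev n).map (edgeEnd K E) ≤ levelFiltration K lev (n + 1) := by
  classical
  rw [Submodule.map_le_iff_le_comap]
  intro v hv p hp
  rw [edgeEnd_apply]
  refine Finset.sum_eq_zero fun q _ => ite_eq_right_iff.2 fun h => hv q ?_
  have := hlev q p h
  simp only [Set.mem_ofPred_eq] at hp ⊢
  lia

variable {κ : Type*} {E : κ → ι → ι → Prop}

theorem iSup_map_edgeEnd_levelFiltration (hlev : ∀ i q p, E i q p → lev p = lev q + 1)
    (hE : ∀ i, Relator.RightUnique (E i)) (hin : ∀ p, 0 < lev p → ∃ i q, E i q p) (n : ℕ) :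
    ⨆ i, (levelFiltration K lev n).map (edgeEnd K (E i)) = levelFiltration K lev (n + 1) := by
  classical
  refine le_antisymm (iSup_le fun i => map_edgeEnd_levelFiltration_le (hlev i) n)
    (levelFiltration_le_iff.2 fun p c hp => ?_)
  obtain ⟨i, q, h⟩ := hin p (by lia)
  have hq : Pi.single q c ∈ levelFiltration K lev n :=
    levelFiltration_le_iff.1 le_rfl q c (by have := hlev i q p h; lia)
  exact Submodule.mem_iSup_of_mem i ⟨_, hq, edgeEnd_single (hE i) h c⟩

theorem iInf_comap_edgeEnd_levelFiltration (hlev : ∀ i q p, E i q p → lev p = lev q + 1)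
    (hE : ∀ i, Relator.LeftUnique (E i)) {n : ℕ} (hout : ∀ q, lev q < n → ∃ i p, E i q p) :
    ⨅ i, (levelFiltration K lev (n + 1)).comap (edgeEnd K (E i)) = levelFiltration K lev n := by
  refine le_antisymm (fun v hv q hq => ?_) (le_iInf fun i =>
    Submodule.map_le_iff_le_comap.1 (map_edgeEnd_levelFiltration_le (hlev i) n))
  obtain ⟨i, p, h⟩ := hout q hq
  have hv' := mem_levelFiltration.1 (Submodule.mem_iInf _ |>.1 hv i) p
    (by have := hlev i q p h; simp only [Set.mem_ofPred_eq] at hq; lia)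
  rwa [edgeEnd_apply_of_edge (hE i) h] at hv'

end EdgeEndomorphisms

/-- The `i`-th block matching between `{0, …, a - 1}` and `{0, …, b - 1}`: it matches the smaller
of the two with the `i`-th block of that length in the larger. The formula is symmetric in the two
sides, which leaves only one side to be treated in the lemmas. -/
def BlockMatched (a b i j k : ℕ) : Prop := max j k = i * min a b + min j k

namespace BlockMatched

variable {a b i j j' k : ℕ}

theorem symm (h : BlockMatched a b i j k) : BlockMatched b a i k j := by
  rwa [BlockMatched, max_comm, min_comm b, min_comm k]

theorem left_unique (hj : j < a) (hj' : j' < a) (hk : k < b) (h : BlockMatched a b i j k)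
    (h' : BlockMatched a b i j' k) : j = j' := by
  have hshift : i * min a b = 0 ∨ min a b ≤ i * min a b := by
    rcases i.eq_zero_or_pos with rfl | hi
    · exact .inl (zero_mul _)
    · exact .inr (Nat.le_mul_of_pos_left _ hi)
  unfold BlockMatched at h h'
  lia

theorem exists_left {r : ℕ} (hb : b ≤ r * a) (hk : k < b) :
    ∃ i < r, ∃ j < a, BlockMatched a b i j k := by
  have ha : 0 < a := Nat.pos_of_mul_pos_left (a := r) (by lia)
  refine ⟨k / a, (Nat.div_lt_iff_lt_mul ha).2 (by lia), k % a, Nat.mod_lt k ha, ?_⟩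
  rw [BlockMatched, max_eq_right (Nat.mod_le k a), min_eq_left (Nat.mod_le k a)]
  rcases le_total a b with hab | hba
  · rw [min_eq_left hab, Nat.div_add_mod']
  · rw [Nat.div_eq_of_lt (by lia), Nat.mod_eq_of_lt (by lia), zero_mul, zero_add]

end BlockMatched

section LayerEdges

variable {m : ℕ} {d : Fin m → ℕ}

/-- The edges labelled `i` of the coefficient quiver with `d l` vertices in layer `l`: the `i`-th
block matching from each layer to the next. -/
def LayerEdge (d : Fin m → ℕ) (i : ℕ) (q p : Σ l, Fin (d l)) : Prop :=
  (p.1 : ℕ) = q.1 + 1 ∧ BlockMatched (d q.1) (d p.1) i q.2 p.2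

theorem LayerEdge.leftUnique (d : Fin m → ℕ) (i : ℕ) : Relator.LeftUnique (LayerEdge d i) := by
  rintro ⟨l, j⟩ ⟨l', j'⟩ ⟨l'', k⟩ ⟨hl, h⟩ ⟨hl', h'⟩
  obtain rfl : l = l' := Fin.ext (Nat.succ_injective (hl.symm.trans hl'))
  rw [Fin.ext (h.left_unique j.2 j'.2 k.2 h')]

theorem LayerEdge.rightUnique (d : Fin m → ℕ) (i : ℕ) : Relator.RightUnique (LayerEdge d i) := by
  rintro ⟨l, j⟩ ⟨l', k⟩ ⟨l'', k'⟩ ⟨hl', h⟩ ⟨hl'', h'⟩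
  obtain rfl : l' = l'' := Fin.ext (hl'.trans hl''.symm)
  rw [Fin.ext (h.symm.left_unique k.2 k'.2 j.2 h'.symm)]

theorem LayerEdge.exists_source {r L : ℕ} {d : Fin (L + 1) → ℕ}
    (hd : ∀ l : Fin L, d l.succ ≤ r * d l.castSucc) (p : Σ l, Fin (d l)) (hp : 0 < (p.1 : ℕ)) :
    ∃ (i : Fin r) (q : _), LayerEdge d i q p := by
  obtain ⟨l, k⟩ := p
  obtain ⟨l, rfl⟩ := Fin.exists_succ_eq.2 (Fin.pos_iff_ne_zero.1 hp)
  obtain ⟨i, hi, j, hj, h⟩ := BlockMatched.exists_left (hd l) k.2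
  exact ⟨⟨i, hi⟩, ⟨l.castSucc, ⟨j, hj⟩⟩, rfl, h⟩

theorem LayerEdge.exists_target {r L : ℕ} {d : Fin (L + 1) → ℕ}
    (hd : ∀ l : Fin L, d l.castSucc ≤ r * d l.succ) (q : Σ l, Fin (d l)) (hq : (q.1 : ℕ) < L) :
    ∃ (i : Fin r) (p : _), LayerEdge d i q p := by
  obtain ⟨l, j⟩ := q
  obtain ⟨l, rfl⟩ : ∃ l' : Fin L, l'.castSucc = l := ⟨⟨l, hq⟩, rfl⟩
  obtain ⟨i, hi, k, hk, h⟩ := BlockMatched.exists_left (hd l) j.2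
  exact ⟨⟨i, hi⟩, ⟨l.succ, ⟨k, hk⟩⟩, rfl, h.symm⟩

theorem card_sigma_fst_val_eq (d : Fin m → ℕ) (l : Fin m) :
    Nat.card {p : Σ l, Fin (d l) // (p.1 : ℕ) = l} = d l := by
  rw [Nat.card_congr ((Equiv.subtypeEquivRight fun _ => Fin.ext_iff.symm).trans
    (Equiv.sigmaSubtype l)), Nat.card_fin]

end LayerEdges

theorem stmt1_general (K : Type u) [Field K] (r L : ℕ) (dv : Fin (L + 1) → ℕ)
    (hdv : ∀ l : Fin L, dv l.succ ≤ r * dv l.castSucc ∧ dv l.castSucc ≤ r * dv l.succ) :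
    ∃ (M : Type u) (_ : AddCommGroup M) (_ : Module K M)
        (_ : Module (TruncAlg K r L) M) (_ : IsScalarTower K (TruncAlg K r L) M)
        (_ : FiniteDimensional K M),
      radLayering K r L M = dv ∧ socLayering K r L M = revTuple L dv := by
  let lev (p : Σ l, Fin (dv l)) : ℕ := p.1
  let E (i : Fin r) := LayerEdge dv i
  have hlev (i : Fin r) (q p) (h : E i q p) : lev p = lev q + 1 := h.1
  obtain ⟨_, _, hjpow, hsoc⟩ := TruncAlg.exists_module_of_filtration (L := L)
    (fun i => edgeEnd K (E i)) (levelFiltration K lev) levelFiltration_zero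
    (levelFiltration_eq_bot fun p => p.1.2)
    (iSup_map_edgeEnd_levelFiltration hlev (fun i => LayerEdge.rightUnique dv i)
      (LayerEdge.exists_source fun l => (hdv l).1))
    (fun n hn => iInf_comap_edgeEnd_levelFiltration hlev (fun i => LayerEdge.leftUnique dv i)
      fun q hq => LayerEdge.exists_target (fun l => (hdv l).2) q (hq.trans_le (by lia)))
  refine ⟨(Σ l, Fin (dv l)) → K, _, _, _, ‹_›, inferInstance, funext fun l => ?_,
    funext fun l => ?_⟩
  · rw [radLayering, hjpow, hjpow, quotDim_levelFiltration, card_sigma_fst_val_eq]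
  · have hl : L + 1 - (l : ℕ) = l.rev + 1 := by rw [Fin.val_rev]; lia
    rw [socLayering, hsoc _ (by lia), hsoc _ (by lia), hl, ← Fin.val_rev, quotDim_levelFiltration,
      card_sigma_fst_val_eq, revTuple]

/-- For `r ≥ 2`, if `(d_0,…,d_L)` satisfies `d_l ≤ r·d_{l-1}` and
`d_{l-1} ≤ r·d_l` for `1 ≤ l ≤ L`, then some finite-dimensional `Λ`-module `M` has
radical layering `(d_0,…,d_L)` and socle layering `(d_L,…,d_0)`. -/
theorem stmt1 (K : Type) [Field K] [IsAlgClosed K] (r L : ℕ) (hr : 2 ≤ r) (hL : 0 < L)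
    (dv : Fin (L + 1) → ℕ)
    (hdv : ∀ l : Fin L, dv l.succ ≤ r * dv l.castSucc ∧ dv l.castSucc ≤ r * dv l.succ) :
    ∃ (M : Type) (_ : AddCommGroup M) (_ : Module K M)
        (_ : Module (TruncAlg K r L) M) (_ : IsScalarTower K (TruncAlg K r L) M)
        (_ : FiniteDimensional K M),
      radLayering K r L M = dv ∧ socLayering K r L M = revTuple L dv := by
  exact stmt1_general K r L dv hdv
end
end

section
/- For any tuple (d_0,…,d_L) ∈ ℕ^{L+1}, there exists a finite-dimensional Λ-module M with rad(M) = (d_0,…,d_L) if and only if d_l ≤ r·d_{l-1} for every l ∈ {1,…,L}. -/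
noncomputable section

/-!
Let `W` be the span of the arrows. As `Λ` is generated by `W`, we have `Λ W = W Λ`, so
`J^(l+1) M = W (J^l M)`. Hence `W ⊗ (J^l M / J^(l+1) M)` surjects onto `J^(l+1) M / J^(l+2) M`, and
`dim W ≤ r` gives the necessity of the inequalities. Conversely, `d_(l+1) ≤ r d_l` means that there
are surjections `(K^(d_l))^r → K^(d_(l+1))`; letting `X_i` act through their `i`-th components turns
`∏ K^(d_l)` into a graded `Λ`-module generated in degree `0`, whose radical filtration is therefore
the degree filtration.
-/

section Algebra

variable {R A M : Type*} [CommSemiring R] [Semiring A] [Algebra R A]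
  [AddCommMonoid M] [Module R M] [Module A M] [IsScalarTower R A M]

variable (R A) in
lemma top_mul_top_submodule : (⊤ : Submodule R A) * ⊤ = ⊤ :=
  top_unique fun a _ => by
    simpa only [one_mul] using Submodule.mul_mem_mul (Submodule.mem_top (x := 1)) (M := ⊤)
      (Submodule.mem_top (x := a))

variable (R A M) in
lemma top_smul_top_submodule : (⊤ : Submodule R A) • (⊤ : Submodule R M) = ⊤ :=
  top_unique fun m _ => by
    simpa only [one_smul] using Submodule.smul_mem_smul (Submodule.mem_top (R := R) (x := (1 : A)))
      (Submodule.mem_top (x := m))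

lemma span_range_smul {ι : Type*} (x : ι → A) (N : Submodule R M) :
    Submodule.span R (Set.range x) • N = ⨆ i, N.map (Algebra.lsmul R R M (x i)) := by
  apply le_antisymm
  · refine Submodule.smul_le.mpr fun a ha n hn => ?_
    induction ha using Submodule.span_induction with
    | mem a ha =>
      obtain ⟨i, rfl⟩ := ha
      exact Submodule.mem_iSup_of_mem i (Submodule.mem_map_of_mem hn)
    | zero => simp only [zero_smul, zero_mem]
    | add a b _ _ ha hb => simpa only [add_smul] using add_mem ha hb
    | smul c a _ ha => simpa only [smul_assoc] using Submodule.smul_mem _ c ha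
  · refine iSup_le fun i => Submodule.map_le_iff_le_comap.mpr fun n hn => ?_
    exact Submodule.smul_mem_smul (Submodule.subset_span (Set.mem_range_self i)) hn

lemma iSup_span_pow_eq_top_of_adjoin_eq_top {s : Set A} (hs : Algebra.adjoin R s = ⊤) :
    ⨆ n, Submodule.span R s ^ n = ⊤ := by
  rw [eq_top_iff, ← Algebra.top_toSubmodule, ← hs, Algebra.adjoin_eq_span, Submodule.span_le]
  intro x hx
  obtain ⟨n, hn⟩ : ∃ n, x ∈ Submodule.span R s ^ n := by
    induction hx using Submonoid.closure_induction with
    | mem x hx => exact ⟨1, (pow_one (Submodule.span R s)).symm ▸ Submodule.subset_span hx⟩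
    | one => exact ⟨0, by simpa only [pow_zero] using Submodule.one_le.mp le_rfl⟩
    | mul x y _ _ hx hy =>
      obtain ⟨m, hm⟩ := hx
      obtain ⟨n, hn⟩ := hy
      exact ⟨m + n, by simpa only [pow_add] using Submodule.mul_mem_mul hm hn⟩
  exact Submodule.mem_iSup_of_mem n hn

lemma commute_top_span_of_adjoin_eq_top {s : Set A} (hs : Algebra.adjoin R s = ⊤) :
    Commute (⊤ : Submodule R A) (Submodule.span R s) := by
  rw [commute_iff_eq, ← iSup_span_pow_eq_top_of_adjoin_eq_top hs, Submodule.iSup_mul,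
    Submodule.mul_iSup]
  exact iSup_congr fun n => (Commute.pow_self _ n).eq

lemma top_mul_span_mul_top_pow_mul_top {s : Set A} (hs : Algebra.adjoin R s = ⊤) (l : ℕ) :
    (⊤ * Submodule.span R s * ⊤) ^ l * ⊤ = Submodule.span R s ^ l * ⊤ := by
  have hcomm := commute_top_span_of_adjoin_eq_top hs
  have hidem : IsIdempotentElem (⊤ : Submodule R A) := top_mul_top_submodule R A
  rw [hcomm.eq, mul_assoc, hidem, hcomm.symm.mul_pow, mul_assoc, ← pow_succ, hidem.pow_succ_eq]

end Algebra

section Dimension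

open scoped TensorProduct

variable {K A M : Type*} [Field K] [Ring A] [Algebra K A] [AddCommGroup M] [Module K M]

lemma finrank_smul_le [Module A M] [IsScalarTower K A M] (I : Submodule K A) (N : Submodule K M)
    [FiniteDimensional K I] [FiniteDimensional K N] :
    Module.finrank K ↥(I • N) ≤ Module.finrank K I * Module.finrank K N := by
  let μ := TensorProduct.lift (Algebra.lsmul K K M).toLinearMap ∘ₗ TensorProduct.mapIncl I N
  have hμ : I • N ≤ LinearMap.range μ :=
    Submodule.smul_le.mpr fun a ha n hn => ⟨⟨a, ha⟩ ⊗ₜ[K] ⟨n, hn⟩, rfl⟩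
  calc Module.finrank K ↥(I • N) ≤ Module.finrank K (LinearMap.range μ) :=
        Submodule.finrank_mono hμ
    _ ≤ Module.finrank K (I ⊗[K] N) := LinearMap.finrank_range_le μ
    _ = Module.finrank K I * Module.finrank K N := Module.finrank_tensorProduct

variable [FiniteDimensional K M]

lemma exists_surjective_linearMap_of_finrank_le {N : Type*} [AddCommGroup N] [Module K N]
    [FiniteDimensional K N] (h : Module.finrank K N ≤ Module.finrank K M) :
    ∃ f : M →ₗ[K] N, Function.Surjective f := by
  obtain ⟨g, hg⟩ := finrank_le_iff_exists_linearMap.mp h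
  obtain ⟨f, hf⟩ := g.exists_leftInverse_of_injective (LinearMap.ker_eq_bot.mpr hg)
  exact ⟨f, fun n => ⟨g n, LinearMap.congr_fun hf n⟩⟩

lemma quotDim_add_finrank {p q : Submodule K M} (h : p ≤ q) :
    quotDim K M p q + Module.finrank K p = Module.finrank K q := by
  rw [quotDim, ← (Submodule.comapSubtypeEquivOfLe h).finrank_eq,
    Submodule.finrank_quotient_add_finrank]

lemma exists_sup_eq_finrank_eq_quotDim {p q : Submodule K M} (h : p ≤ q) :
    ∃ c : Submodule K M, c ⊔ p = q ∧ Module.finrank K c = quotDim K M p q := by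
  obtain ⟨c, hdisj, hsup⟩ := IsModularLattice.exists_disjoint_and_sup_eq h
  have hdim := Submodule.finrank_sup_add_finrank_inf_eq p c
  rw [hsup, hdisj.eq_bot, finrank_bot, add_zero, ← quotDim_add_finrank h, add_comm] at hdim
  exact ⟨c, sup_comm c p ▸ hsup, (Nat.add_left_cancel hdim).symm⟩

lemma quotDim_smul_le [Module A M] [IsScalarTower K A M] (I : Submodule K A)
    [FiniteDimensional K I] {p q : Submodule K M} (h : p ≤ q) :
    quotDim K M (I • p) (I • q) ≤ Module.finrank K I * quotDim K M p q := by
  obtain ⟨c, rfl, hc⟩ := exists_sup_eq_finrank_eq_quotDim h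
  have hadd := quotDim_add_finrank (smul_mono_right I h)
  rw [← hc]
  refine le_trans ?_ (finrank_smul_le I c)
  have hsup := Submodule.finrank_add_le_finrank_add_finrank (I • c) (I • p)
  rw [← Submodule.smul_sup] at hsup
  omega

end Dimension

section RadicalFiltration

variable (K : Type*) [Field K] (r L : ℕ)

/-- The span of the arrows `X_1, …, X_r` of `Λ`. As a left and as a right ideal it generates `J`,
so `J^l M` is obtained from `M` by applying it `l` times. -/
def arrowSpan : Submodule K (TruncAlg K r L) :=
  Submodule.span K (Set.range (gen K r L))

instance : FiniteDimensional K (arrowSpan K r L) :=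
  FiniteDimensional.span_of_finite K (Set.finite_range _)

lemma finrank_arrowSpan_le : Module.finrank K (arrowSpan K r L) ≤ r :=
  (finrank_range_le_card (gen K r L)).trans_eq (Fintype.card_fin r)

lemma adjoin_range_gen : Algebra.adjoin K (Set.range (gen K r L)) = ⊤ := by
  let π : FreeAlgebra K (Fin r) →ₐ[K] TruncAlg K r L := RingQuot.mkAlgHom K (TruncRel K r L)
  have hπ : Function.Surjective π := RingQuot.mkAlgHom_surjective K (TruncRel K r L)
  have hgen : gen K r L = π ∘ FreeAlgebra.ι K := rfl
  rw [hgen, Set.range_comp, ← AlgHom.map_adjoin, FreeAlgebra.adjoin_range_ι, Algebra.map_top,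
    (AlgHom.range_eq_top π).mpr hπ]

variable (M : Type*) [AddCommGroup M] [Module K M] [Module (TruncAlg K r L) M]
  [IsScalarTower K (TruncAlg K r L) M]

lemma Jrad_pow_smul_top (l : ℕ) :
    (Jrad K r L ^ l) • (⊤ : Submodule K M) = (arrowSpan K r L ^ l) • ⊤ := by
  rw [← top_smul_top_submodule K (TruncAlg K r L) M, ← Submodule.smul_assoc,
    ← Submodule.smul_assoc]
  exact congrArg (· • ⊤) (top_mul_span_mul_top_pow_mul_top (adjoin_range_gen K r L) l)

lemma smul_mem_arrowSpan_pow_smul_top {l : ℕ} (a : TruncAlg K r L) {m : M}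
    (hm : m ∈ (arrowSpan K r L ^ l) • (⊤ : Submodule K M)) :
    a • m ∈ (arrowSpan K r L ^ l) • (⊤ : Submodule K M) := by
  have hcomm : Commute ⊤ (arrowSpan K r L ^ l) :=
    (commute_top_span_of_adjoin_eq_top (adjoin_range_gen K r L)).pow_right l
  have hstable : (⊤ : Submodule K (TruncAlg K r L)) • (arrowSpan K r L ^ l • (⊤ : Submodule K M))
      = arrowSpan K r L ^ l • ⊤ := by
    rw [← Submodule.smul_assoc, smul_eq_mul, hcomm.eq, ← smul_eq_mul, Submodule.smul_assoc,
      top_smul_top_submodule]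
  exact hstable ▸ Submodule.smul_mem_smul Submodule.mem_top hm

lemma jpow_restrictScalars (l : ℕ) :
    (jpow K r L M l).restrictScalars K = (arrowSpan K r L ^ l) • ⊤ := by
  apply le_antisymm
  · intro x hx
    replace hx : x ∈ jpow K r L M l := hx
    unfold jpow at hx
    induction hx using Submodule.span_induction with
    | mem x hx =>
      obtain ⟨a, ha, m, rfl⟩ := hx
      rw [← Jrad_pow_smul_top]
      exact Submodule.smul_mem_smul ha Submodule.mem_top
    | zero => exact zero_mem _
    | add x y _ _ hx hy => exact add_mem hx hy
    | smul a x _ hx => exact smul_mem_arrowSpan_pow_smul_top K r L M a hx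
  · rw [← Jrad_pow_smul_top, Submodule.smul_le]
    exact fun a ha m _ => Submodule.subset_span ⟨a, ha, m, rfl⟩

lemma jpow_zero_restrictScalars : (jpow K r L M 0).restrictScalars K = ⊤ := by
  rw [jpow_restrictScalars, pow_zero, Submodule.one_smul]

lemma jpow_succ_restrictScalars (l : ℕ) : (jpow K r L M (l + 1)).restrictScalars K =
    arrowSpan K r L • (jpow K r L M l).restrictScalars K := by
  simp only [jpow_restrictScalars, pow_succ', ← smul_eq_mul, Submodule.smul_assoc]

lemma jpow_succ_le (l : ℕ) : (jpow K r L M (l + 1)).restrictScalars K ≤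
    (jpow K r L M l).restrictScalars K := by
  simp only [jpow_restrictScalars, pow_succ, ← smul_eq_mul, Submodule.smul_assoc]
  exact smul_mono_right _ le_top

lemma radLayering_succ_le [FiniteDimensional K M] (l : Fin L) :
    radLayering K r L M l.succ ≤ r * radLayering K r L M l.castSucc := by
  refine le_trans ?_ (Nat.mul_le_mul_right _ (finrank_arrowSpan_le K r L))
  have h := quotDim_smul_le (arrowSpan K r L) (jpow_succ_le K r L M l)
  rwa [← jpow_succ_restrictScalars, ← jpow_succ_restrictScalars] at h

end RadicalFiltration

section Layers

variable {R : Type*} [Semiring R] {r L : ℕ} {V : Fin (L + 1) → Type*} [∀ l, AddCommMonoid (V l)]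
  [∀ l, Module R (V l)]

/-- The operator by which `X_i` acts on the graded space `∏ V l` when the arrows act by
`π l : (V l)^r → V (l + 1)`: it sends the layer `l` to the layer `l + 1` through the `i`-th
component of `π l`. -/
def layerShift (π : ∀ l : Fin L, (Fin r → V l.castSucc) →ₗ[R] V l.succ) (i : Fin r) :
    Module.End R (∀ l, V l) :=
  LinearMap.pi <| Fin.cons 0 fun l =>
    π l ∘ₗ LinearMap.single R (fun _ => V l.castSucc) i ∘ₗ LinearMap.proj l.castSucc

variable (R V) in
/-- The elements of the graded space `∏ V l` concentrated in the layers `≥ l`. -/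
def layersFrom (l : ℕ) : Submodule R (∀ k, V k) :=
  Submodule.pi {k | (k : ℕ) < l} fun _ => ⊥

lemma mem_layersFrom {l : ℕ} {f : ∀ k, V k} :
    f ∈ layersFrom R V l ↔ ∀ k : Fin (L + 1), (k : ℕ) < l → f k = 0 :=
  Iff.rfl

variable (R V) in
lemma layersFrom_zero : layersFrom R V 0 = ⊤ :=
  top_unique fun _ _ _ hk => absurd hk (Nat.not_lt_zero _)

variable (R V) in
lemma layersFrom_last : layersFrom R V (L + 1) = ⊥ :=
  bot_unique fun _ hf => funext fun k => hf k k.is_lt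

variable (π : ∀ l : Fin L, (Fin r → V l.castSucc) →ₗ[R] V l.succ)

lemma layerShift_apply_zero (i : Fin r) (f : ∀ l, V l) : layerShift π i f 0 = 0 :=
  rfl

lemma layerShift_apply_succ (i : Fin r) (f : ∀ l, V l) (l : Fin L) :
    layerShift π i f l.succ = π l (Pi.single i (f l.castSucc)) :=
  rfl

lemma layerShift_mem_layersFrom (i : Fin r) {l : ℕ} {f : ∀ k, V k} (hf : f ∈ layersFrom R V l) :
    layerShift π i f ∈ layersFrom R V (l + 1) := by
  rw [mem_layersFrom] at hf ⊢
  intro k hk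
  cases k using Fin.cases with
  | zero => exact layerShift_apply_zero π i f
  | succ k =>
    rw [layerShift_apply_succ, hf k.castSucc (Nat.lt_of_succ_lt_succ hk), Pi.single_zero, map_zero]

lemma prod_map_layerShift_mem_layersFrom (s : List (Fin r)) (f : ∀ l, V l) :
    (s.map (layerShift π)).prod f ∈ layersFrom R V s.length := by
  induction s with
  | nil => exact layersFrom_zero R V ▸ Submodule.mem_top
  | cons i s ih => exact layerShift_mem_layersFrom π i ih

lemma prod_map_layerShift_eq_zero (s : List (Fin r)) (hs : s.length = L + 1) :
    (s.map (layerShift π)).prod = 0 := by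
  refine LinearMap.ext fun f => ?_
  have h := prod_map_layerShift_mem_layersFrom π s f
  rwa [hs, layersFrom_last, Submodule.mem_bot] at h

variable {π}

lemma exists_sum_layerShift_eq (hπ : ∀ l, Function.Surjective (π l)) {l : ℕ} {f : ∀ k, V k}
    (hf : f ∈ layersFrom R V (l + 1)) :
    ∃ g : Fin r → ∀ k, V k, (∀ i, g i ∈ layersFrom R V l) ∧ ∑ i, layerShift π i (g i) = f := by
  have hlift (k : Fin L) (v : V k.succ) : ∃ w, π k w = v ∧ (v = 0 → w = 0) := by
    obtain rfl | hv := eq_or_ne v 0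
    · exact ⟨0, map_zero _, fun _ => rfl⟩
    · exact (hπ k v).imp fun w hw => ⟨hw, fun h => absurd h hv⟩
  choose σ hσ hσ_zero using hlift
  let g (i : Fin r) : ∀ k, V k := Fin.snoc (fun k => σ k (f k.succ) i) 0
  have hg (i : Fin r) (k : Fin L) : g i k.castSucc = σ k (f k.succ) i := Fin.snoc_castSucc ..
  refine ⟨g, fun i => ?_, ?_⟩
  · rw [mem_layersFrom] at hf ⊢
    intro k hk
    cases k using Fin.lastCases with
    | last => exact Fin.snoc_last _ _
    | cast k => rw [hg, hσ_zero k _ (hf k.succ (Nat.succ_lt_succ hk)), Pi.zero_apply]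
  · funext k
    cases k using Fin.cases with
    | zero =>
      simp only [Finset.sum_apply, layerShift_apply_zero, Finset.sum_const_zero]
      exact (hf 0 l.succ_pos).symm
    | succ k =>
      simp only [Finset.sum_apply, layerShift_apply_succ, hg]
      rw [← map_sum, Finset.univ_sum_single]
      exact hσ k (f k.succ)

lemma layersFrom_succ (hπ : ∀ l, Function.Surjective (π l)) (l : ℕ) :
    layersFrom R V (l + 1) = ⨆ i, (layersFrom R V l).map (layerShift π i) := by
  apply le_antisymm
  · intro f hf
    obtain ⟨g, hg, rfl⟩ := exists_sum_layerShift_eq hπ hf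
    exact Submodule.sum_mem _ fun i _ =>
      Submodule.mem_iSup_of_mem i (Submodule.mem_map_of_mem (hg i))
  · exact iSup_le fun i => Submodule.map_le_iff_le_comap.mpr fun f hf =>
      layerShift_mem_layersFrom π i hf

end Layers

section GradedModule

variable {K : Type*} [Field K] {r L : ℕ}

/-- The universal property of `Λ`: elements `X_1, …, X_r` of a `K`-algebra all of whose products of
length `L + 1` vanish define an algebra homomorphism out of `Λ`. -/
def TruncAlg.lift {B : Type*} [Semiring B] [Algebra K B] (X : Fin r → B)
    (hX : ∀ s : List (Fin r), s.length = L + 1 → (s.map X).prod = 0) : TruncAlg K r L →ₐ[K] B :=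
  RingQuot.liftAlgHom K ⟨FreeAlgebra.lift K X, by
    rintro _ _ ⟨⟨f, rfl⟩, rfl⟩
    have h := hX (List.ofFn f) (List.length_ofFn)
    simpa only [map_list_prod, List.map_ofFn, Function.comp_def, FreeAlgebra.lift_ι_apply,
      map_zero] using h⟩

lemma TruncAlg.lift_gen {B : Type*} [Semiring B] [Algebra K B] (X : Fin r → B)
    (hX : ∀ s : List (Fin r), s.length = L + 1 → (s.map X).prod = 0) (i : Fin r) :
    TruncAlg.lift X hX (gen K r L i) = X i :=
  (RingQuot.liftAlgHom_mkAlgHom_apply K _ _ _).trans (FreeAlgebra.lift_ι_apply X i)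

variable {V : Fin (L + 1) → Type*} [∀ l, AddCommGroup (V l)] [∀ l, Module K (V l)]

variable (K V) in
lemma quotDim_layersFrom (l : Fin (L + 1)) :
    quotDim K (∀ k, V k) (layersFrom K V (l + 1)) (layersFrom K V l) =
      Module.finrank K (V l) := by
  let ev : layersFrom K V l →ₗ[K] V l := (LinearMap.proj l).domRestrict (layersFrom K V l)
  have hsurj : Function.Surjective ev := fun v =>
    ⟨⟨Pi.single l v, fun k (hk : (k : ℕ) < l) => Pi.single_eq_of_ne (Fin.ne_of_lt hk) v⟩,
      Pi.single_eq_same l v⟩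
  have hker : (layersFrom K V (l + 1)).comap (layersFrom K V l).subtype = LinearMap.ker ev := by
    ext ⟨f, hf⟩
    constructor
    · exact fun h => h l (Nat.lt_succ_self l)
    · intro (h : f l = 0) k hk
      rcases Nat.lt_succ_iff_lt_or_eq.mp hk with hlt | heq
      · exact hf k hlt
      · exact Fin.ext heq ▸ h
  rw [quotDim, hker, (ev.quotKerEquivOfSurjective hsurj).finrank_eq]

theorem exists_module_radLayering_eq_finrank
    {π : ∀ l : Fin L, (Fin r → V l.castSucc) →ₗ[K] V l.succ}
    (hπ : ∀ l, Function.Surjective (π l)) :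
    ∃ (_ : Module (TruncAlg K r L) (∀ l, V l)) (_ : IsScalarTower K (TruncAlg K r L) (∀ l, V l)),
      radLayering K r L (∀ l, V l) = fun l => Module.finrank K (V l) := by
  let ρ : TruncAlg K r L →ₐ[K] Module.End K (∀ l, V l) :=
    TruncAlg.lift (layerShift π) (prod_map_layerShift_eq_zero π)
  let _ : Module (TruncAlg K r L) (∀ l, V l) := Module.compHom _ ρ.toRingHom
  have _ : IsScalarTower K (TruncAlg K r L) (∀ l, V l) :=
    ⟨fun c a f => LinearMap.congr_fun (map_smul ρ c a) f⟩
  have hgen (i : Fin r) : Algebra.lsmul K K (∀ l, V l) (gen K r L i) = layerShift π i :=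
    TruncAlg.lift_gen (layerShift π) (prod_map_layerShift_eq_zero π) i
  have hjpow (l : ℕ) : (jpow K r L (∀ l, V l) l).restrictScalars K = layersFrom K V l := by
    induction l with
    | zero => rw [jpow_zero_restrictScalars, layersFrom_zero]
    | succ l ih =>
      simp only [jpow_succ_restrictScalars, ih, arrowSpan, span_range_smul, hgen,
        layersFrom_succ hπ]
  refine ⟨inferInstance, inferInstance, funext fun l => ?_⟩
  rw [radLayering, hjpow, hjpow, quotDim_layersFrom]

end GradedModule

theorem stmt2_general.{u} {K : Type u} [Field K] (r L : ℕ) (dv : Fin (L + 1) → ℕ) :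
    (∃ (M : Type u) (_ : AddCommGroup M) (_ : Module K M)
        (_ : Module (TruncAlg K r L) M) (_ : IsScalarTower K (TruncAlg K r L) M)
        (_ : FiniteDimensional K M),
      radLayering K r L M = dv) ↔
    (∀ l : Fin L, dv l.succ ≤ r * dv l.castSucc) := by
  constructor
  · rintro ⟨M, _, _, _, _, _, rfl⟩ l
    exact radLayering_succ_le K r L M l
  · intro h
    have hsurj (l : Fin L) : ∃ π : (Fin r → Fin (dv l.castSucc) → K) →ₗ[K] (Fin (dv l.succ) → K),
        Function.Surjective π := by
      apply exists_surjective_linearMap_of_finrank_le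
      simpa only [Module.finrank_pi_fintype, Module.finrank_self, mul_one, Finset.sum_const,
        Finset.card_univ, Fintype.card_fin, smul_eq_mul] using h l
    choose π hπ using hsurj
    obtain ⟨_, _, hrad⟩ :=
      exists_module_radLayering_eq_finrank (V := fun l => Fin (dv l) → K) hπ
    exact ⟨∀ l, Fin (dv l) → K, inferInstance, inferInstance, inferInstance, inferInstance,
      inferInstance, by simpa using hrad⟩

/-- A tuple `(d_0,…,d_L)` is the radical layering of a finite-dimensional
`Λ`-module iff `d_l ≤ r·d_{l-1}` for all `1 ≤ l ≤ L`. -/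
theorem stmt2 (K : Type) [Field K] [IsAlgClosed K] (r L : ℕ) (hr : 0 < r) (hL : 0 < L)
    (dv : Fin (L + 1) → ℕ) :
    (∃ (M : Type) (_ : AddCommGroup M) (_ : Module K M)
        (_ : Module (TruncAlg K r L) M) (_ : IsScalarTower K (TruncAlg K r L) M)
        (_ : FiniteDimensional K M),
      radLayering K r L M = dv) ↔
    (∀ l : Fin L, dv l.succ ≤ r * dv l.castSucc) :=
  stmt2_general r L dv
end
end
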